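/- Let f₁, f₂ : ℝ → ℝ be nonnegative integrable functions with ∫_ℝ f_i(α) dα = 1, and let P > 0, σ₁² > 0, σ₂² > 0 be reals. For i = 1, 2 define a_n^{(i)} = ∫_{−n}^{n} log₂(1 + Pα²/σ_i²) f_i(α) dα and assume a^{(i)} = ∫_ℝ log₂(1 + Pα²/σ_i²) f_i(α) dα is finite. If for i = 1, 2 there exists a computable function q_i : ℕ × ℕ → ℚ with |a_n^{(i)} − q_i(k,n)| ≤ 2^(−k) for all k, n, then the secrecy capacity C_S = a^{(1)} − a^{(2)} belongs to the class Δ₂; that is, C_S is the difference of two left-computable real numbers. -/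

import Mathlib

open Filter MeasureTheory intervalIntegral

/-- A real number `x` is left-computable (`Σ₁`) if it is the limit of a
monotonically nondecreasing computable sequence of rationals. -/
def LeftComputable (x : ℝ) : Prop :=
  ∃ q : ℕ → ℚ, Computable q ∧ (∀ n, q n ≤ q (n + 1)) ∧
    Tendsto (fun n => (q n : ℝ)) atTop (nhds x)

/-- `x ∈ Δ₂` iff `x` is a difference of two left-computable reals. -/
def Delta2 (x : ℝ) : Prop :=
  ∃ a b : ℝ, LeftComputable a ∧ LeftComputable b ∧ x = a - b

/-!
If `aₙ ↑ a` and `|aₙ - q n n| ≤ 2⁻ⁿ`, then the rationals `q n n - 2⁻ⁿ` lie below `a` and converge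
to `a`, so their running maxima witness that `a` is left-computable. Truncated integrals of a
nonnegative integrable function are such a sequence `aₙ`.

The remaining point is that subtraction and maximum of rationals are computable for the numbering of
`ℚ` that Mathlib provides: the `n`-th rational is the one whose (numerator, denominator) code is the
`n`-th smallest code of a reduced fraction. Those codes form a primitive recursive set, so numerator
and denominator are computable from the number. Conversely, the number of a fraction `z / d` is
found by unbounded search, since `q = z / d` is decidable by cross-multiplication.
-/

theorem computable_of_computablePred_graph {α β : Type*} [Primcodable α] [Denumerable β]
    {f : α → β} (hf : ComputablePred fun x : α × β => f x.1 = x.2) : Computable f := by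
  classical
  have hgraph : ComputablePred fun x : α × ℕ => f x.1 = Denumerable.ofNat β x.2 :=
    (hf.decide.comp (Computable.fst.pair ((Computable.ofNat β).comp Computable.snd))).computablePred
  have hcode : ∀ a, ∃ n, f a = Denumerable.ofNat β n := fun a =>
    ⟨Encodable.encode (f a), (Denumerable.ofNat_encode _).symm⟩
  refine ((Computable.ofNat β).comp (Computable.find hgraph hcode)).of_eq fun a => ?_
  exact (Nat.find_spec (hcode a)).symm

theorem primrec_count {p : ℕ → Prop} [DecidablePred p] (hp : PrimrecPred p) :
    Primrec (Nat.count p) :=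
  (Primrec.list_length.comp ((Primrec.listFilter hp).comp Primrec.list_range)).of_eq fun n => by
    rw [Nat.count, List.countP_eq_length_filter]

theorem computable_nth {p : ℕ → Prop} (hp : PrimrecPred p)
    (hinf : (Set.ofPred p).Infinite) : Computable (Nat.nth p) := by
  classical
  have hgraph (n m : ℕ) : p m ∧ Nat.count p m = n ↔ Nat.nth p n = m := by
    constructor
    · rintro ⟨hm, rfl⟩
      exact Nat.nth_count hm
    · rintro rfl
      exact ⟨Nat.nth_mem_of_infinite hinf n, Nat.count_nth_of_infinite hinf n⟩
  have hprim : PrimrecPred fun x : ℕ × ℕ => p x.2 ∧ Nat.count p x.2 = x.1 :=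
    (hp.comp Primrec.snd).and
      (Primrec.eq.comp ((primrec_count hp).comp Primrec.snd) Primrec.fst)
  exact computable_of_computablePred_graph
    (hprim.of_eq fun x => hgraph x.1 x.2).computablePred

theorem encode_ofNat_ofEncodableOfInfinite (α : Type*) [inst : Encodable α] [Infinite α] (n : ℕ) :
    inst.encode (@Denumerable.ofNat α (.ofEncodableOfInfinite α) n) =
      Nat.nth (· ∈ Set.range inst.encode) n := by
  let := Encodable.decidableRangeEncode α
  have hinf : (Set.range inst.encode).Infinite :=
    Set.infinite_range_of_injective Encodable.encode_injective
  have : Infinite (Set.range inst.encode) := hinf.to_subtype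
  have hofNat : @Denumerable.ofNat α (.ofEncodableOfInfinite α) n =
      (Encodable.equivRangeEncode α).symm (Nat.Subtype.ofNat (Set.range inst.encode) n) :=
    @Denumerable.ofNat_of_decode α (.ofEncodableOfInfinite α) _ _ rfl
  calc inst.encode (@Denumerable.ofNat α (.ofEncodableOfInfinite α) n)
    _ = Encodable.equivRangeEncode α (@Denumerable.ofNat α (.ofEncodableOfInfinite α) n) := rfl
    _ = Nat.Subtype.ofNat (Set.range inst.encode) n := by rw [hofNat, Equiv.apply_symm_apply]
    _ = Nat.Subtype.orderIsoOfNat (Set.range inst.encode) n := by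
      rw [Nat.Subtype.orderIsoOfNat_apply]
    _ = Nat.nth (· ∈ Set.range inst.encode) n := (Nat.nth_apply_eq_orderIsoOfNat hinf n).symm

theorem primrecRel_dvd : PrimrecRel fun m n : ℕ => m ∣ n :=
  (Primrec.eq.comp (Primrec.nat_mod.comp Primrec.snd Primrec.fst) (Primrec.const 0)).of_eq
    fun _ => (Nat.dvd_iff_mod_eq_zero ..).symm

theorem coprime_iff_forall_le_add (m n : ℕ) :
    m.Coprime n ↔ ∀ d ≤ m + n, d ∣ m → d ∣ n → d = 1 := by
  refine ⟨fun h d _ => Nat.eq_one_of_dvd_coprimes h, fun h => ?_⟩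
  refine h (m.gcd n) ?_ (Nat.gcd_dvd_left m n) (Nat.gcd_dvd_right m n)
  rcases m.eq_zero_or_pos with rfl | hm
  · simp
  · exact (Nat.gcd_le_left n hm).trans (Nat.le_add_right m n)

theorem primrecRel_coprime : PrimrecRel Nat.Coprime := by
  have hleft : PrimrecRel fun (d : ℕ) (x : ℕ × ℕ) => d ∣ x.1 :=
    primrecRel_dvd.comp Primrec.fst (Primrec.fst.comp Primrec.snd)
  have hright : PrimrecRel fun (d : ℕ) (x : ℕ × ℕ) => d ∣ x.2 :=
    primrecRel_dvd.comp Primrec.fst (Primrec.snd.comp Primrec.snd)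
  have hone : PrimrecRel fun (d : ℕ) (_ : ℕ × ℕ) => d = 1 :=
    Primrec.eq.comp Primrec.fst (Primrec.const 1)
  have himp : PrimrecRel fun (d : ℕ) (x : ℕ × ℕ) => d ∣ x.1 → d ∣ x.2 → d = 1 :=
    (hleft.not.or (hright.not.or hone)).of_eq fun _ => by tauto
  have hrange : Primrec fun x : ℕ × ℕ => List.range (x.1 + x.2 + 1) :=
    Primrec.list_range.comp (Primrec.succ.comp (Primrec.nat_add.comp Primrec.fst Primrec.snd))
  exact (himp.forall_mem_list.comp hrange Primrec.id).of_eq fun x => by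
    simp only [List.mem_range, Nat.lt_succ_iff, id_eq, coprime_iff_forall_le_add]

theorem encode_int_ofNat (n : ℕ) : Encodable.encode (Int.ofNat n) = 2 * n := rfl

theorem encode_int_negSucc (n : ℕ) : Encodable.encode (Int.negSucc n) = 2 * n + 1 := rfl

theorem primrec_int_natAbs : Primrec Int.natAbs := by
  have : Primrec fun z : ℤ => (Encodable.encode z + 1) / 2 :=
    Primrec.nat_div.comp (Primrec.succ.comp Primrec.encode) (Primrec.const 2)
  refine this.of_eq fun z => ?_
  cases z with
  | ofNat n => rw [encode_int_ofNat, Int.natAbs_ofNat']; omega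
  | negSucc n => rw [encode_int_negSucc, Int.natAbs_negSucc]; omega

theorem primrec_int_toNat : Primrec Int.toNat := by
  have : Primrec fun z : ℤ => if Encodable.encode z % 2 = 0 then Encodable.encode z / 2 else 0 :=
    Primrec.ite
      (Primrec.eq.comp (Primrec.nat_mod.comp Primrec.encode (Primrec.const 2)) (Primrec.const 0))
      (Primrec.nat_div.comp Primrec.encode (Primrec.const 2)) (Primrec.const 0)
  refine this.of_eq fun z => ?_
  cases z with
  | ofNat n => rw [encode_int_ofNat]; simp
  | negSucc n => simp [encode_int_negSucc]

theorem primrec_int_toNat_neg : Primrec fun z : ℤ => (-z).toNat :=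
  (Primrec.nat_sub.comp primrec_int_natAbs primrec_int_toNat).of_eq fun z => by omega

theorem primrec₂_int_subNatNat : Primrec₂ Int.subNatNat := by
  rw [← Primrec₂.encode_iff]
  have : Primrec₂ fun m n : ℕ => if n ≤ m then 2 * (m - n) else 2 * (n - m) - 1 :=
    Primrec.ite (Primrec.nat_le.comp Primrec.snd Primrec.fst)
      (Primrec.nat_double.comp Primrec.nat_sub)
      (Primrec.pred.comp (Primrec.nat_double.comp (Primrec.nat_sub.comp Primrec.snd Primrec.fst)))
  refine this.of_eq fun m n => ?_
  split_ifs with h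
  · rw [Int.subNatNat_of_le h, ← Int.ofNat_eq_natCast, encode_int_ofNat]
  · rw [Int.subNatNat_of_lt (not_le.1 h), encode_int_negSucc, Nat.pred_eq_sub_one]
    omega

theorem primrec₂_int_natCast_sub_natCast : Primrec₂ fun m n : ℕ => (m - n : ℤ) :=
  primrec₂_int_subNatNat.of_eq fun _ _ => Int.subNatNat_eq_coe

theorem primrec₂_int_sub : Primrec₂ ((· - ·) : ℤ → ℤ → ℤ) := by
  have hpos : Primrec₂ fun z w : ℤ => z.toNat + (-w).toNat :=
    Primrec.nat_add.comp (primrec_int_toNat.comp Primrec.fst)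
      (primrec_int_toNat_neg.comp Primrec.snd)
  refine (primrec₂_int_natCast_sub_natCast.comp hpos (hpos.comp Primrec.snd Primrec.fst)).of_eq
    fun x => ?_
  dsimp only
  omega

theorem primrec₂_int_mul_natCast : Primrec₂ fun (z : ℤ) (n : ℕ) => z * n := by
  have hpos : Primrec₂ fun (z : ℤ) (n : ℕ) => z.toNat * n :=
    Primrec.nat_mul.comp (primrec_int_toNat.comp Primrec.fst) Primrec.snd
  have hneg : Primrec₂ fun (z : ℤ) (n : ℕ) => (-z).toNat * n :=
    Primrec.nat_mul.comp (primrec_int_toNat_neg.comp Primrec.fst) Primrec.snd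
  refine (primrec₂_int_natCast_sub_natCast.comp₂ hpos hneg).of_eq fun z n => ?_
  push_cast
  rw [← sub_mul, Int.toNat_sub_toNat_neg]

theorem primrecRel_int_le : PrimrecRel ((· ≤ ·) : ℤ → ℤ → Prop) := by
  have : PrimrecRel fun z w : ℤ => (z - w).toNat = 0 :=
    Primrec.eq.comp (primrec_int_toNat.comp primrec₂_int_sub) (Primrec.const 0)
  exact this.of_eq fun z w => by omega

/-- The pair of numerator and denominator as a natural number, i.e. the encoding of ℚ given by
`Rat.instEncodable`. Computability on ℚ refers to a different encoding, that of
`Rat.instDenumerable`, which numbers the values of `ratCode` in increasing order. -/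
def ratCode (q : ℚ) : ℕ := Nat.pair (Encodable.encode q.num) q.den

theorem ratCode_injective : Function.Injective ratCode :=
  Rat.instEncodable.encode_injective

theorem ratCode_ofNat (n : ℕ) :
    ratCode (Denumerable.ofNat ℚ n) = Nat.nth (· ∈ Set.range ratCode) n :=
  encode_ofNat_ofEncodableOfInfinite ℚ n

theorem mem_range_ratCode {c : ℕ} : c ∈ Set.range ratCode ↔
    0 < c.unpair.2 ∧ (Denumerable.ofNat ℤ c.unpair.1).natAbs.Coprime c.unpair.2 := by
  constructor
  · rintro ⟨q, rfl⟩
    simp only [ratCode, Nat.unpair_pair, Denumerable.ofNat_encode]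
    exact ⟨q.den_pos, q.reduced⟩
  · rintro ⟨hpos, hcop⟩
    refine ⟨⟨_, _, hpos.ne', hcop⟩, ?_⟩
    rw [ratCode, Denumerable.encode_ofNat, Nat.pair_unpair]

theorem primrecPred_mem_range_ratCode : PrimrecPred (· ∈ Set.range ratCode) := by
  have hnum : Primrec fun c : ℕ => (Denumerable.ofNat ℤ c.unpair.1).natAbs :=
    primrec_int_natAbs.comp ((Primrec.ofNat ℤ).comp (Primrec.fst.comp Primrec.unpair))
  have hden : Primrec fun c : ℕ => c.unpair.2 := Primrec.snd.comp Primrec.unpair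
  exact ((Primrec.nat_lt.comp (Primrec.const 0) hden).and
    (primrecRel_coprime.comp hnum hden)).of_eq fun _ => mem_range_ratCode.symm

theorem computable_ratCode : Computable ratCode := by
  have hnth : Computable (Nat.nth (· ∈ Set.range ratCode)) :=
    computable_nth primrecPred_mem_range_ratCode (Set.infinite_range_of_injective ratCode_injective)
  exact (hnth.comp Computable.encode).of_eq fun q => by
    rw [← ratCode_ofNat, Denumerable.ofNat_encode]

theorem computable_rat_num : Computable Rat.num :=
  ((Computable.ofNat ℤ).comp
    (Computable.fst.comp (Computable.unpair.comp computable_ratCode))).of_eq fun q => by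
      rw [ratCode, Nat.unpair_pair, Denumerable.ofNat_encode]

theorem computable_rat_den : Computable Rat.den :=
  (Computable.snd.comp (Computable.unpair.comp computable_ratCode)).of_eq fun q => by
    rw [ratCode, Nat.unpair_pair]

theorem mkRat_eq_iff_mul_den_eq (z : ℤ) (d : ℕ) (q : ℚ) :
    mkRat z d = q ↔ (d = 0 ∧ q.num = 0) ∨ (d ≠ 0 ∧ z * q.den = q.num * d) := by
  rcases eq_or_ne d 0 with rfl | hd
  · simp [eq_comm]
  · rw [← Rat.mkRat_self q, Rat.mkRat_eq_iff hd q.den_nz, Rat.mkRat_self]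
    simp [hd]

theorem computable₂_mkRat : Computable₂ mkRat := by
  have hprim : PrimrecPred fun x : (ℤ × ℕ) × (ℤ × ℕ) =>
      (x.1.2 = 0 ∧ x.2.1 = 0) ∨ (x.1.2 ≠ 0 ∧ x.1.1 * x.2.2 = x.2.1 * x.1.2) := by
    have hzero : PrimrecPred fun x : (ℤ × ℕ) × (ℤ × ℕ) => x.1.2 = 0 :=
      Primrec.eq.comp (Primrec.snd.comp Primrec.fst) (Primrec.const 0)
    have hcross : PrimrecPred fun x : (ℤ × ℕ) × (ℤ × ℕ) => x.1.1 * x.2.2 = x.2.1 * x.1.2 :=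
      Primrec.eq.comp
        (primrec₂_int_mul_natCast.comp (Primrec.fst.comp Primrec.fst)
          (Primrec.snd.comp Primrec.snd))
        (primrec₂_int_mul_natCast.comp (Primrec.fst.comp Primrec.snd)
          (Primrec.snd.comp Primrec.fst))
    exact (hzero.and (Primrec.eq.comp (Primrec.fst.comp Primrec.snd) (Primrec.const 0))).or
      (hzero.not.and hcross)
  have hgraph : ComputablePred fun x : (ℤ × ℕ) × ℚ => mkRat x.1.1 x.1.2 = x.2 := by
    classical
    have hcoords : Computable fun x : (ℤ × ℕ) × ℚ => (x.1, x.2.num, x.2.den) :=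
      Computable.fst.pair
        ((computable_rat_num.comp Computable.snd).pair (computable_rat_den.comp Computable.snd))
    exact (hprim.decide.to_comp.comp hcoords).computablePred.of_eq fun x =>
      (mkRat_eq_iff_mul_den_eq ..).symm
  exact computable_of_computablePred_graph hgraph

theorem computable₂_rat_num_mul_den : Computable₂ fun q r : ℚ => q.num * r.den :=
  primrec₂_int_mul_natCast.to_comp.comp (computable_rat_num.comp Computable.fst)
    (computable_rat_den.comp Computable.snd)

theorem computable₂_rat_sub : Computable₂ ((· - ·) : ℚ → ℚ → ℚ) := by
  have hnum : Computable₂ fun q r : ℚ => q.num * r.den - r.num * q.den :=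
    primrec₂_int_sub.to_comp.comp computable₂_rat_num_mul_den
      (computable₂_rat_num_mul_den.comp Computable.snd Computable.fst)
  have hden : Computable₂ fun q r : ℚ => q.den * r.den :=
    Primrec.nat_mul.to_comp.comp (computable_rat_den.comp Computable.fst)
      (computable_rat_den.comp Computable.snd)
  exact (computable₂_mkRat.comp hnum hden).of_eq fun x => (Rat.sub_def' x.1 x.2).symm

theorem computable₂_rat_max : Computable₂ (max : ℚ → ℚ → ℚ) := by
  have hle : Computable fun x : ℚ × ℚ => decide (x.1.num * x.2.den ≤ x.2.num * x.1.den) :=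
    primrecRel_int_le.decide.to_comp.comp computable₂_rat_num_mul_den
      (computable₂_rat_num_mul_den.comp Computable.snd Computable.fst)
  refine (Computable.cond hle Computable.snd Computable.fst).of_eq fun x => ?_
  simp only [← Rat.le_iff, Bool.cond_decide, max_def]

theorem computable_rat_inv_two_pow : Computable fun n : ℕ => ((2 : ℚ) ^ n)⁻¹ := by
  have hpow : Primrec fun n : ℕ => 2 ^ n :=
    (Primrec₂.unpaired'.1 Nat.Primrec.pow).comp (Primrec.const 2) Primrec.id
  exact (computable₂_mkRat.comp (Computable.const 1) hpow.to_comp).of_eq fun n => by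
    simp [Rat.mkRat_eq_div]

theorem computable_partialSups {α : Type*} [Primcodable α] [SemilatticeSup α]
    (hsup : Computable₂ ((· ⊔ ·) : α → α → α)) {f : ℕ → α} (hf : Computable f) :
    Computable (partialSups f) := by
  have hstep : Computable₂ fun (_ : ℕ) (x : ℕ × α) => x.2 ⊔ f (x.1 + 1) :=
    hsup.comp (Computable.snd.comp Computable.snd)
      (hf.comp (Computable.succ.comp (Computable.fst.comp Computable.snd)))
  refine (Computable.nat_rec Computable.id (Computable.const (f 0)) hstep).of_eq fun n => ?_
  induction n with
  | zero => rw [partialSups_zero]; rfl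
  | succ n ih => rw [← Order.succ_eq_add_one, partialSups_succ, ← ih]; rfl

theorem leftComputable_of_tendsto_of_le {q : ℕ → ℚ} {x : ℝ} (hq : Computable q)
    (hle : ∀ n, (q n : ℝ) ≤ x) (hlim : Tendsto (fun n => (q n : ℝ)) atTop (nhds x)) :
    LeftComputable x := by
  have hsup_le (n : ℕ) : (partialSups q n : ℝ) ≤ x :=
    (partialSups_iff_forall (fun r : ℚ => (r : ℝ) ≤ x) (by simp)).2 fun j _ => hle j
  have hle_sup (n : ℕ) : (q n : ℝ) ≤ partialSups q n := Rat.cast_le.2 (le_partialSups q n)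
  exact ⟨partialSups q, computable_partialSups computable₂_rat_max hq,
    fun n => (partialSups q).monotone n.le_succ,
    tendsto_of_tendsto_of_tendsto_of_le_of_le hlim tendsto_const_nhds hle_sup hsup_le⟩

theorem leftComputable_of_abs_sub_le {a : ℕ → ℝ} {x : ℝ} {q ε : ℕ → ℚ}
    (hq : Computable q) (hε : Computable ε) (hε_lim : Tendsto (fun n => (ε n : ℝ)) atTop (nhds 0))
    (happrox : ∀ n, |a n - q n| ≤ ε n) (hle : ∀ n, a n ≤ x) (hlim : Tendsto a atTop (nhds x)) :
    LeftComputable x := by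
  have hlower (n : ℕ) : a n - 2 * ε n ≤ ((q n - ε n : ℚ) : ℝ) := by
    push_cast
    linarith [(abs_le.1 (happrox n)).2]
  have hupper (n : ℕ) : ((q n - ε n : ℚ) : ℝ) ≤ a n := by
    push_cast
    linarith [(abs_le.1 (happrox n)).1]
  have hlower_lim : Tendsto (fun n => a n - 2 * (ε n : ℝ)) atTop (nhds x) := by
    simpa using hlim.sub (hε_lim.const_mul 2)
  exact leftComputable_of_tendsto_of_le (computable₂_rat_sub.comp hq hε)
    (fun n => (hupper n).trans (hle n))
    (tendsto_of_tendsto_of_tendsto_of_le_of_le hlower_lim hlim hlower hupper)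

theorem leftComputable_integral {μ : Measure ℝ} {g : ℝ → ℝ} (hg : 0 ≤ᵐ[μ] g)
    (hint : Integrable g μ) {q : ℕ → ℕ → ℚ} (hq : Computable₂ q)
    (happrox : ∀ k n : ℕ, |(∫ x in (-(n : ℝ))..n, g x ∂μ) - q k n| ≤ 2 ^ (-(k : ℤ))) :
    LeftComputable (∫ x, g x ∂μ) := by
  have hdiag (n : ℕ) : |(∫ x in (-(n : ℝ))..n, g x ∂μ) - q n n| ≤ (((2 : ℚ) ^ n)⁻¹ : ℚ) := by
    simpa using happrox n n
  have herr : Tendsto (fun n : ℕ => ((((2 : ℚ) ^ n)⁻¹ : ℚ) : ℝ)) atTop (nhds 0) := by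
    push_cast
    exact tendsto_inv_atTop_zero.comp (tendsto_pow_atTop_atTop_of_one_lt one_lt_two)
  have hle (n : ℕ) : ∫ x in (-(n : ℝ))..n, g x ∂μ ≤ ∫ x, g x ∂μ := by
    rw [intervalIntegral.integral_of_le (neg_le_self n.cast_nonneg)]
    exact setIntegral_le_integral hint hg
  have hlim : Tendsto (fun n : ℕ => ∫ x in (-(n : ℝ))..n, g x ∂μ) atTop (nhds (∫ x, g x ∂μ)) :=
    intervalIntegral_tendsto_integral hint
      (tendsto_neg_atTop_atBot.comp tendsto_natCast_atTop_atTop) tendsto_natCast_atTop_atTop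
  exact leftComputable_of_abs_sub_le (hq.comp Computable.id Computable.id)
    computable_rat_inv_two_pow herr hdiag hle hlim

theorem logb_one_add_mul_sq_div_nonneg {P σ : ℝ} (hP : 0 ≤ P) (hσ : 0 ≤ σ) (x : ℝ) :
    0 ≤ Real.logb 2 (1 + P * x ^ 2 / σ) :=
  Real.logb_nonneg one_lt_two (le_add_of_nonneg_right (by positivity))

theorem stmt14_general {μ₁ μ₂ : Measure ℝ} {g₁ g₂ : ℝ → ℝ} (hg₁ : 0 ≤ᵐ[μ₁] g₁) (hg₂ : 0 ≤ᵐ[μ₂] g₂)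
    (hint₁ : Integrable g₁ μ₁) (hint₂ : Integrable g₂ μ₂)
    {q₁ q₂ : ℕ → ℕ → ℚ} (hq₁ : Computable₂ q₁) (hq₂ : Computable₂ q₂)
    (happrox₁ : ∀ k n : ℕ, |(∫ x in (-(n : ℝ))..n, g₁ x ∂μ₁) - q₁ k n| ≤ 2 ^ (-(k : ℤ)))
    (happrox₂ : ∀ k n : ℕ, |(∫ x in (-(n : ℝ))..n, g₂ x ∂μ₂) - q₂ k n| ≤ 2 ^ (-(k : ℤ))) :
    Delta2 ((∫ x, g₁ x ∂μ₁) - ∫ x, g₂ x ∂μ₂) :=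
  ⟨_, _, leftComputable_integral hg₁ hint₁ hq₁ happrox₁,
    leftComputable_integral hg₂ hint₂ hq₂ happrox₂, rfl⟩

/-- Theorem 3 of the paper: if the truncated integrals
`aₙ⁽ⁱ⁾ = ∫_{-n}^{n} log₂(1 + Pα²/σᵢ²) fᵢ(α) dα` are uniformly computably
approximable and the full integrals exist, then the secrecy capacity
`C_S = a⁽¹⁾ - a⁽²⁾` lies in `Δ₂`. -/
theorem stmt14 (f₁ f₂ : ℝ → ℝ) (P σ1sq σ2sq : ℝ)
    (hP : 0 < P) (hσ1 : 0 < σ1sq) (hσ2 : 0 < σ2sq)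
    (hf₁nonneg : ∀ α, 0 ≤ f₁ α) (hf₂nonneg : ∀ α, 0 ≤ f₂ α)
    (hf₁int : Integrable f₁) (hf₂int : Integrable f₂)
    (hf₁one : (∫ α, f₁ α) = 1) (hf₂one : (∫ α, f₂ α) = 1)
    (hint1 : Integrable (fun α => Real.logb 2 (1 + P * α ^ 2 / σ1sq) * f₁ α))
    (hint2 : Integrable (fun α => Real.logb 2 (1 + P * α ^ 2 / σ2sq) * f₂ α))
    (q₁ q₂ : ℕ → ℕ → ℚ) (hq₁ : Computable₂ q₁) (hq₂ : Computable₂ q₂)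
    (happrox1 : ∀ k n : ℕ,
      |(∫ α in (-(n : ℝ))..(n : ℝ), Real.logb 2 (1 + P * α ^ 2 / σ1sq) * f₁ α) -
        (q₁ k n : ℝ)| ≤ 2 ^ (-(k : ℤ)))
    (happrox2 : ∀ k n : ℕ,
      |(∫ α in (-(n : ℝ))..(n : ℝ), Real.logb 2 (1 + P * α ^ 2 / σ2sq) * f₂ α) -
        (q₂ k n : ℝ)| ≤ 2 ^ (-(k : ℤ))) :
    Delta2 ((∫ α, Real.logb 2 (1 + P * α ^ 2 / σ1sq) * f₁ α) -
      (∫ α, Real.logb 2 (1 + P * α ^ 2 / σ2sq) * f₂ α)) :=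
  stmt14_general
    (ae_of_all _ fun α => mul_nonneg (logb_one_add_mul_sq_div_nonneg hP.le hσ1.le α) (hf₁nonneg α))
    (ae_of_all _ fun α => mul_nonneg (logb_one_add_mul_sq_div_nonneg hP.le hσ2.le α) (hf₂nonneg α))
    hint1 hint2 hq₁ hq₂ happrox1 happrox2
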